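/- arXiv:1908.11278 — 10 statements merged into one kernel-verified Lean document; each statement's English description precedes it below -/
import Mathlib

section
/- Let λ, μ, ν ∈ ℝ and b, p, x ∈ ℍ. Suppose that for all purely imaginary quaternions β, β′ and every quaternion s one has (λ/2) • ((β*β′ − β′*β) * s * b) + (μ/2) • ((β*β′ − β′*β) * s * p) + (ν/4) • ((β*β′ − β′*β) * s) = β*β′*s*(x*x) − β′*β*s*(x*x). Then x * x = (λ/2) • b + (μ/2) • p + ((ν/4 : ℝ) : ℍ). (Taking x = b this is the quaternionic content of the implication '[B,B] = λB + μP + νJ implies b² = ½λb + ½μp + ¼ν' of the paper's Lemma on the k-module structure; taking x = p it gives the corresponding implication for [P,P].) -/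
theorem quaternion_i_mul_j_ne_j_mul_i {R : Type*} [CommRing R] [NeZero (2 : R)] :
    (⟨0, 1, 0, 0⟩ : Quaternion R) * ⟨0, 0, 1, 0⟩ ≠ ⟨0, 0, 1, 0⟩ * ⟨0, 1, 0, 0⟩ := by
  intro i_mul_j_eq_j_mul_i
  have one_eq_neg_one : (1 : R) = -1 := by
    simpa using congrArg QuaternionAlgebra.imK i_mul_j_eq_j_mul_i
  exact two_ne_zero (α := R) (by linear_combination one_eq_neg_one)

theorem stmt_1_general {R A : Type*} [CommSemiring R] [Ring A] [NoZeroDivisors A] [Algebra R A]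
    {u v s : A} (huv : u * v ≠ v * u) (hs : s ≠ 0) {r t w : R} {b p y : A}
    (H : r • ((u * v - v * u) * s * b) + t • ((u * v - v * u) * s * p)
        + w • ((u * v - v * u) * s) = u * v * s * y - v * u * s * y) :
    y = r • b + t • p + algebraMap R A w := by
  have commutator_mul_ne_zero : (u * v - v * u) * s ≠ 0 := mul_ne_zero (sub_ne_zero.2 huv) hs
  apply mul_left_cancel₀ commutator_mul_ne_zero
  calc (u * v - v * u) * s * y
      = u * v * s * y - v * u * s * y := by rw [sub_mul, sub_mul]
    _ = r • ((u * v - v * u) * s * b) + t • ((u * v - v * u) * s * p)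
        + w • ((u * v - v * u) * s) := H.symm
    _ = (u * v - v * u) * s * (r • b + t • p + algebraMap R A w) := by
      rw [mul_add, mul_add, mul_smul_comm, mul_smul_comm, ← Algebra.commutes, Algebra.smul_def w]

/-- Quaternionic content of `[B,B] = λB + μP + νJ ⟹ b² = ½λb + ½μp + ¼ν`
(and, with `x = p`, of the corresponding implication for `[P,P]`) from the
paper's Lemma on the k-module structure of the spinor representation. -/
theorem stmt_1 (l m n : ℝ) (b p x : Quaternion ℝ)
    (H : ∀ β β' s : Quaternion ℝ, β.re = 0 → β'.re = 0 →
      (l/2) • ((β*β' - β'*β) * s * b) + (m/2) • ((β*β' - β'*β) * s * p)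
        + (n/4) • ((β*β' - β'*β) * s)
      = β*β'*s*(x*x) - β'*β*s*(x*x)) :
    x * x = (l/2) • b + (m/2) • p + ((n/4 : ℝ) : Quaternion ℝ) :=
  stmt_1_general quaternion_i_mul_j_ne_j_mul_i one_ne_zero (H _ _ 1 rfl rfl)
end

section
/- Let λ ∈ ℝ and h, b, p ∈ ℍ. Suppose that for all purely imaginary quaternions β, π and every quaternion s one has (−(λ * (β*π).re)) • (s * h) = β*π*s*(p*b) − π*β*s*(b*p). Then b*p + p*b = 0 and b*p − p*b = λ • h. (This is the quaternionic content of the implication '[B,P] = λH implies bp + pb = 0 and [b,p] = λh' of the paper's Lemma on the k-module structure of the spinor representation.) -/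
/-!
The case `s = 1` suffices, and the argument works in any quaternion algebra `ℍ[R,c₁,c₃]` with `c₁`
and `c₃` regular. For `β = i`, `π = j` the product `i * j = k = -(j * i)` has no real part, so the
hypothesis reads `k * (p * b + b * p) = 0`, and `k` can be cancelled because `k * k = -(c₁ * c₃)`.
For `β = π = i`, where `i * i = c₁`, it reads `-(l * c₁) • h = c₁ • (p * b - b * p)`, and `c₁` can
be cancelled.
-/

section QuaternionAlgebra

open scoped Quaternion

variable {R A : Type*} [CommRing R]

theorem add_eq_zero_of_mul_eq_neg_mul [NonUnitalRing A] {u v x y : A}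
    (hreg : IsLeftRegular (u * v)) (hanti : v * u = -(u * v))
    (h : u * v * x - v * u * y = 0) : x + y = 0 := by
  rw [hanti, neg_mul, sub_neg_eq_add, ← mul_add] at h
  exact hreg.mul_left_eq_zero_iff.mp h

theorem sub_eq_smul_of_mul_self_eq_smul_one [Ring A] [Algebra R A] {c l : R} {u h x y : A}
    (hreg : IsSMulRegular A c) (hu : u * u = c • (1 : A))
    (H : (-(l * c)) • h = u * u * x - u * u * y) : y - x = l • h := by
  apply hreg
  calc c • (y - x) = -(u * u * x - u * u * y) := by
        rw [hu, smul_one_mul, smul_one_mul, smul_sub, neg_sub]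
    _ = c • l • h := by rw [← H, neg_smul, neg_neg, smul_smul, mul_comm]

theorem isLeftRegular_quaternionBasis_k [Ring A] [Algebra R A] [Module.IsTorsionFree R A]
    {c₁ c₂ c₃ : R} (q : QuaternionAlgebra.Basis A c₁ c₂ c₃) (h₁ : IsRegular c₁)
    (h₃ : IsRegular c₃) : IsLeftRegular q.k := by
  have hreg : IsSMulRegular A (c₁ * c₃) := (h₁.mul h₃).isSMulRegular
  have hkk : IsLeftRegular (q.k * q.k) := fun x y hxy ↦ hreg <| by
    simpa only [q.k_mul_k, neg_mul, smul_one_mul, neg_inj] using hxy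
  exact hkk.of_mul

theorem stmt_2_general {c₁ c₃ : R} (h₁ : IsRegular c₁) (h₃ : IsRegular c₃) (l : R)
    (h b p : ℍ[R,c₁,c₃])
    (H : ∀ β π : ℍ[R,c₁,c₃], β.re = 0 → π.re = 0 →
      (-(l * (β * π).re)) • h = β * π * (p * b) - π * β * (b * p)) :
    b * p + p * b = 0 ∧ b * p - p * b = l • h := by
  let q : QuaternionAlgebra.Basis ℍ[R,c₁,c₃] c₁ 0 c₃ := .self R
  have hii : q.i * q.i = c₁ • 1 := by rw [q.i_mul_i, zero_smul, add_zero]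
  have hii_re : (q.i * q.i).re = c₁ := by simp [hii]
  have hji : q.j * q.i = -(q.i * q.j) := by rw [q.j_mul_i, q.i_mul_j, zero_smul, zero_sub]
  have hij_re : (q.i * q.j).re = 0 := by rw [q.i_mul_j]; rfl
  constructor
  · have hij := H q.i q.j rfl rfl
    rw [hij_re, mul_zero, neg_zero, zero_smul] at hij
    have hreg : IsLeftRegular (q.i * q.j) := q.i_mul_j ▸ isLeftRegular_quaternionBasis_k q h₁ h₃
    rw [add_comm]
    exact add_eq_zero_of_mul_eq_neg_mul hreg hji hij.symm
  · have hi := H q.i q.i rfl rfl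
    rw [hii_re] at hi
    exact sub_eq_smul_of_mul_self_eq_smul_one h₁.isSMulRegular hii hi

end QuaternionAlgebra

/-- Quaternionic content of `[B,P] = λH ⟹ bp + pb = 0 and [b,p] = λh`
from the paper's Lemma on the k-module structure of the spinor representation. -/
theorem stmt_2 (l : ℝ) (h b p : Quaternion ℝ)
    (H : ∀ β π s : Quaternion ℝ, β.re = 0 → π.re = 0 →
      (-(l * (β*π).re)) • (s * h) = β*π*s*(p*b) - π*β*s*(b*p)) :
    b*p + p*b = 0 ∧ b*p - p*b = l • h := by
  have hreg : IsRegular (-1 : ℝ) := isUnit_one.neg.isRegular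
  have H₁ := fun β π ↦ H β π 1
  simp only [one_mul, mul_one] at H₁
  exact stmt_2_general hreg hreg l h b p H₁
end

section
/- Let q ∈ ℍ be a nonzero quaternion and d ∈ ℝ, and suppose q * k * conj q = d • k. Then either d = normSq q and q lies in the real span of 1 and k (i.e. q.imI = 0 and q.imJ = 0), or d = −normSq q and q lies in the real span of i and j (i.e. q.re = 0 and q.imK = 0). (This is the paper's Lemma 'dk = qkq̄', used repeatedly in computing the automorphism groups of kinematical Lie superalgebras.) -/
/-- The quaternion unit `k`. -/
def quatK : Quaternion ℝ := ⟨0, 0, 0, 1⟩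

/-!
Taking norms in `q p q̄ = d p` with `p ≠ 0` gives `d² = |q|⁴`, so `d = ±|q|²`. Writing `|q|² = q q̄`
and cancelling `q̄`, the equation says that `q` commutes or anticommutes with `p`. For `p = k` the
quaternions commuting with `k` are `span {1, k}`, and those anticommuting with it are `span {i, j}`.
-/

open scoped Quaternion

section ScaledConjugation

variable {R : Type*} [CommRing R] [LinearOrder R] [IsStrictOrderedRing R] {q p p' : ℍ[R]} {d : R}

theorem mul_mul_star_eq_normSq_smul_iff_semiconjBy (hq : q ≠ 0) :
    q * p * star q = Quaternion.normSq q • p' ↔ SemiconjBy q p p' := by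
  have h_smul : Quaternion.normSq q • p' = p' * q * star q := by
    rw [mul_assoc, Quaternion.self_mul_star, Quaternion.mul_coe_eq_smul]
  rw [h_smul, mul_left_inj' (star_ne_zero.mpr hq), SemiconjBy]

theorem eq_normSq_or_eq_neg_normSq_of_mul_mul_star_eq_smul (hp : p ≠ 0)
    (h : q * p * star q = d • p) :
    d = Quaternion.normSq q ∨ d = -Quaternion.normSq q := by
  have h_norm : d ^ 2 * Quaternion.normSq p = Quaternion.normSq q ^ 2 * Quaternion.normSq p := by
    calc d ^ 2 * Quaternion.normSq p
        = Quaternion.normSq (q * p * star q) := by rw [h, Quaternion.normSq_smul]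
      _ = Quaternion.normSq q ^ 2 * Quaternion.normSq p := by
        rw [map_mul, map_mul, Quaternion.normSq_star]
        ring
  exact sq_eq_sq_iff_eq_or_eq_neg.mp
    (mul_right_cancel₀ (Quaternion.normSq_ne_zero.mpr hp) h_norm)

theorem commute_or_semiconjBy_neg_of_mul_mul_star_eq_smul (hq : q ≠ 0) (hp : p ≠ 0)
    (h : q * p * star q = d • p) :
    (d = Quaternion.normSq q ∧ Commute q p) ∨
      (d = -Quaternion.normSq q ∧ SemiconjBy q p (-p)) := by
  refine (eq_normSq_or_eq_neg_normSq_of_mul_mul_star_eq_smul hp h).imp ?_ ?_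
  · rintro rfl
    exact ⟨rfl, (mul_mul_star_eq_normSq_smul_iff_semiconjBy hq).mp h⟩
  · rintro rfl
    rw [neg_smul, ← smul_neg] at h
    exact ⟨rfl, (mul_mul_star_eq_normSq_smul_iff_semiconjBy hq).mp h⟩

end ScaledConjugation

@[simp] theorem re_quatK : quatK.re = 0 := rfl

@[simp] theorem imI_quatK : quatK.imI = 0 := rfl

@[simp] theorem imJ_quatK : quatK.imJ = 0 := rfl

@[simp] theorem imK_quatK : quatK.imK = 1 := rfl

theorem quatK_ne_zero : quatK ≠ 0 := by
  simp [Quaternion.ext_iff]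

theorem commute_quatK_iff {q : ℍ[ℝ]} : Commute q quatK ↔ q.imI = 0 ∧ q.imJ = 0 := by
  simp [commute_iff_eq, Quaternion.ext_iff, self_eq_neg, neg_eq_self, and_comm]

theorem semiconjBy_quatK_neg_iff {q : ℍ[ℝ]} :
    SemiconjBy q quatK (-quatK) ↔ q.re = 0 ∧ q.imK = 0 := by
  simp [SemiconjBy, Quaternion.ext_iff, self_eq_neg, neg_eq_self, and_comm]

/-- The paper's Lemma `dk = qkq̄`: if `q k q̄ = d k` for a nonzero quaternion `q`
and a real number `d`, then either `d = |q|²` and `q ∈ span{1,k}`, or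
`d = −|q|²` and `q ∈ span{i,j}`. -/
theorem stmt_4 (q : Quaternion ℝ) (hq : q ≠ 0) (d : ℝ)
    (H : q * quatK * star q = d • quatK) :
    (d = Quaternion.normSq q ∧ q.imI = 0 ∧ q.imJ = 0) ∨
    (d = -Quaternion.normSq q ∧ q.re = 0 ∧ q.imK = 0) := by
  exact (commute_or_semiconjBy_neg_of_mul_mul_star_eq_smul hq quatK_ne_zero H).imp
    (And.imp_right commute_quatK_iff.mp) (And.imp_right semiconjBy_quatK_neg_iff.mp)
end

section
/- Let q ∈ ℍ be a nonzero quaternion and let α_q : ℍ → ℍ be the map x ↦ q * x * conj q. Then α_q maps the (j,k)-plane in the purely imaginary quaternions into itself (i.e. for every x with x.re = 0 and x.imI = 0, the quaternion q * x * conj q again satisfies (q*x*conj q).re = 0 and (q*x*conj q).imI = 0) if and only if q lies in the real span of 1 and i (q.imJ = 0 and q.imK = 0) or q lies in the real span of j and k (q.re = 0 and q.imI = 0). (This is the paper's Lemma on conjugation preserving a coordinate plane of Im ℍ.) -/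
/-!
Write `q = z + w * j` and `x = v * j` with `z`, `w`, `v` in the copy of the complex numbers spanned
by `1` and `i`. The component of `q * x * star q` in that copy is `z * star w * v` minus its
conjugate, so its real part is `0` and its `i`-coordinate is twice the imaginary part of
`z * star w * v`. This vanishes for all `v` exactly when `z * star w = 0`, that is, when `z = 0` or
`w = 0`.
-/

open scoped Quaternion

section CommRing

variable {R : Type*} [CommRing R]

theorem re_mul_mul_star (q x : ℍ[R]) :
    (q * x * star q).re = Quaternion.normSq q * x.re := by
  simp only [Quaternion.normSq_def', Quaternion.re_mul, Quaternion.imI_mul, Quaternion.imJ_mul,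
    Quaternion.imK_mul, Quaternion.re_star, Quaternion.imI_star, Quaternion.imJ_star,
    Quaternion.imK_star]
  ring

theorem imI_mul_mul_star (q x : ℍ[R]) :
    (q * x * star q).imI =
      (q.re ^ 2 + q.imI ^ 2 - (q.imJ ^ 2 + q.imK ^ 2)) * x.imI +
        2 * ((q.imI * q.imJ - q.re * q.imK) * x.imJ +
          (q.re * q.imJ + q.imI * q.imK) * x.imK) := by
  simp only [Quaternion.re_mul, Quaternion.imI_mul, Quaternion.imJ_mul, Quaternion.imK_mul,
    Quaternion.re_star, Quaternion.imI_star, Quaternion.imJ_star, Quaternion.imK_star]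
  ring

-- The right-hand side says `z * star w = 0` for `z = q.re + q.imI * i`, `w = q.imJ + q.imK * i`.
theorem forall_mul_mul_star_re_imI_eq_zero_iff [NoZeroDivisors R] [NeZero (2 : R)] (q : ℍ[R]) :
    (∀ x : ℍ[R], x.re = 0 → x.imI = 0 →
        (q * x * star q).re = 0 ∧ (q * x * star q).imI = 0) ↔
      q.re * q.imJ + q.imI * q.imK = 0 ∧ q.imI * q.imJ - q.re * q.imK = 0 := by
  constructor
  · intro h
    have imI_j := (imI_mul_mul_star q _).symm.trans (h ⟨0, 0, 1, 0⟩ rfl rfl).2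
    have imI_k := (imI_mul_mul_star q _).symm.trans (h ⟨0, 0, 0, 1⟩ rfl rfl).2
    simp only [mul_zero, mul_one, zero_add, add_zero, mul_eq_zero, two_ne_zero, false_or]
      at imI_j imI_k
    exact ⟨imI_k, imI_j⟩
  · rintro ⟨hre, him⟩ x hx_re hx_imI
    rw [re_mul_mul_star, imI_mul_mul_star, hre, him, hx_re, hx_imI]
    simp only [mul_zero, zero_mul, add_zero, and_self]

end CommRing

section LinearOrderedCommRing

variable {R : Type*} [CommRing R] [LinearOrder R] [IsStrictOrderedRing R]

theorem mul_add_mul_eq_zero_and_mul_sub_mul_eq_zero_iff {a b c d : R} :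
    a * c + b * d = 0 ∧ b * c - a * d = 0 ↔ c = 0 ∧ d = 0 ∨ a = 0 ∧ b = 0 := by
  have brahmagupta : (c * c + d * d) * (a * a + b * b) =
      (a * c + b * d) * (a * c + b * d) + (b * c - a * d) * (b * c - a * d) := by
    ring
  rw [← mul_self_add_mul_self_eq_zero, ← brahmagupta, mul_eq_zero, mul_self_add_mul_self_eq_zero,
    mul_self_add_mul_self_eq_zero]

theorem stmt_5_general (q : ℍ[R]) :
    (∀ x : ℍ[R], x.re = 0 → x.imI = 0 →
        (q * x * star q).re = 0 ∧ (q * x * star q).imI = 0) ↔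
      ((q.imJ = 0 ∧ q.imK = 0) ∨ (q.re = 0 ∧ q.imI = 0)) :=
  (forall_mul_mul_star_re_imI_eq_zero_iff q).trans
    mul_add_mul_eq_zero_and_mul_sub_mul_eq_zero_iff

end LinearOrderedCommRing

/-- The paper's Lemma on conjugation preserving a coordinate plane of `Im ℍ`:
for a nonzero quaternion `q`, the map `x ↦ q x q̄` preserves the `(j,k)`-plane
of the purely imaginary quaternions if and only if `q ∈ span{1,i}` or
`q ∈ span{j,k}`. -/
theorem stmt_5 (q : Quaternion ℝ) (hq : q ≠ 0) :
    (∀ x : Quaternion ℝ, x.re = 0 → x.imI = 0 →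
        (q * x * star q).re = 0 ∧ (q * x * star q).imI = 0) ↔
    ((q.imJ = 0 ∧ q.imK = 0) ∨ (q.re = 0 ∧ q.imI = 0)) :=
  stmt_5_general q
end

section
/- Let b, p ∈ ℍ satisfy b * b = ((−1/4 : ℝ) : ℍ), p * p = ((−1/4 : ℝ) : ℍ) and b * p + p * b = 0, and set h := b * p − p * b. Then b, p and h are purely imaginary, h = 2 • (b * p), h * h = ((−1/4 : ℝ) : ℍ), h * b + b * h = 0, h * p + p * h = 0, h * b − b * h = p, and p * h − h * p = b. (This is the paper's assertion, in the classification of the anti-de Sitter superalgebra osp(1|4), that the relations p = [h,b], b = [p,h], h = [b,p], b² = p² = −¼ and b ⟂ p force (2b, 2p, 2h) to be an oriented orthonormal basis of the imaginary quaternions.) -/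
/-!
Two anticommuting elements `b`, `p` with scalar squares generate a quaternion algebra with basis
`1, b, p, b * p`, and `[b, p]` is twice the last basis vector, so every algebraic relation is read
off the multiplication table. For the real parts, a quaternion `a` with `a ^ 2 = r ≤ 0` has
`normSq a = -r` by multiplicativity of the norm, and `a ^ 2 = -normSq a` holds only for imaginary
`a`.
-/

open scoped Quaternion

section QuaternionBasis

variable {R A : Type*} [CommRing R] [Ring A] [Algebra R A] {c₁ c₃ : R}

/-- The quaternion basis `(x, y, x * y)` generated by anticommuting elements `x` and `y` whose
squares are the scalars `c₁` and `c₃`. -/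
def quaternionBasisOfAnticomm (x y : A) (hx : x * x = algebraMap R A c₁)
    (hy : y * y = algebraMap R A c₃) (hxy : x * y + y * x = 0) :
    QuaternionAlgebra.Basis A c₁ 0 c₃ where
  i := x
  j := y
  k := x * y
  i_mul_i := by rw [hx, Algebra.algebraMap_eq_smul_one, zero_smul, add_zero]
  j_mul_j := by rw [hy, Algebra.algebraMap_eq_smul_one]
  i_mul_j := rfl
  j_mul_i := by rw [zero_smul, zero_sub, eq_neg_of_add_eq_zero_right hxy]

variable (q : QuaternionAlgebra.Basis A c₁ 0 c₃)

theorem quaternionBasis_lie_i_j : ⁅q.i, q.j⁆ = (2 : R) • q.k := by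
  rw [Ring.lie_def, q.i_mul_j, q.j_mul_i]
  module

theorem quaternionBasis_lie_i_j_mul_self :
    ⁅q.i, q.j⁆ * ⁅q.i, q.j⁆ = algebraMap R A (-4 * (c₁ * c₃)) := by
  rw [quaternionBasis_lie_i_j, smul_mul_smul_comm, q.k_mul_k, Algebra.algebraMap_eq_smul_one]
  module

theorem quaternionBasis_lie_i_j_anticomm_i : ⁅q.i, q.j⁆ * q.i + q.i * ⁅q.i, q.j⁆ = 0 := by
  rw [quaternionBasis_lie_i_j, smul_mul_assoc, mul_smul_comm, q.k_mul_i, q.i_mul_k]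
  module

theorem quaternionBasis_lie_i_j_anticomm_j : ⁅q.i, q.j⁆ * q.j + q.j * ⁅q.i, q.j⁆ = 0 := by
  rw [quaternionBasis_lie_i_j, smul_mul_assoc, mul_smul_comm, q.k_mul_j, q.j_mul_k]
  module

theorem quaternionBasis_lie_lie_i_j_i : ⁅⁅q.i, q.j⁆, q.i⁆ = (-4 * c₁) • q.j := by
  rw [quaternionBasis_lie_i_j, Ring.lie_def, smul_mul_assoc, mul_smul_comm, q.k_mul_i, q.i_mul_k]
  module

theorem quaternionBasis_lie_j_lie_i_j : ⁅q.j, ⁅q.i, q.j⁆⁆ = (-4 * c₃) • q.i := by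
  rw [quaternionBasis_lie_i_j, Ring.lie_def, smul_mul_assoc, mul_smul_comm, q.j_mul_k, q.k_mul_j]
  module

end QuaternionBasis

section OrderedRing

variable {R : Type*} [CommRing R] [LinearOrder R] [IsStrictOrderedRing R]

theorem quaternion_normSq_eq_neg_of_mul_self_eq_coe {a : ℍ[R]} {r : R} (hr : r ≤ 0)
    (ha : a * a = r) : Quaternion.normSq a = -r := by
  refine (sq_eq_sq₀ Quaternion.normSq_nonneg (neg_nonneg.2 hr)).1 ?_
  rw [sq, ← map_mul, ha, Quaternion.normSq_coe, neg_sq]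

theorem quaternion_re_eq_zero_of_mul_self_eq_coe {a : ℍ[R]} {r : R} (hr : r ≤ 0)
    (ha : a * a = r) : a.re = 0 := by
  rw [← Quaternion.sq_eq_neg_normSq, quaternion_normSq_eq_neg_of_mul_self_eq_coe hr ha, sq, ha,
    Quaternion.coe_neg, neg_neg]

theorem stmt_10_general {β γ : R} (hβ : β ≤ 0) (hγ : γ ≤ 0) (b p h : ℍ[R])
    (hb : b * b = β) (hp : p * p = γ) (hbp : b * p + p * b = 0) (hh : h = b * p - p * b) :
    b.re = 0 ∧ p.re = 0 ∧ h.re = 0 ∧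
    h = (2 : R) • (b * p) ∧ h * h = ((-4 * (β * γ) : R) : ℍ[R]) ∧
    h * b + b * h = 0 ∧ h * p + p * h = 0 ∧
    h * b - b * h = (-4 * β) • p ∧ p * h - h * p = (-4 * γ) • b := by
  let q : QuaternionAlgebra.Basis ℍ[R] β 0 γ := quaternionBasisOfAnticomm b p hb hp hbp
  have h_mul_self : h * h = ((-4 * (β * γ) : R) : ℍ[R]) :=
    hh ▸ quaternionBasis_lie_i_j_mul_self q
  have h_sq_nonpos : -4 * (β * γ) ≤ 0 := by linarith [mul_nonneg_of_nonpos_of_nonpos hβ hγ]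
  refine ⟨quaternion_re_eq_zero_of_mul_self_eq_coe hβ hb,
    quaternion_re_eq_zero_of_mul_self_eq_coe hγ hp,
    quaternion_re_eq_zero_of_mul_self_eq_coe h_sq_nonpos h_mul_self, ?_⟩
  subst hh
  exact ⟨quaternionBasis_lie_i_j q, h_mul_self,
    quaternionBasis_lie_i_j_anticomm_i q, quaternionBasis_lie_i_j_anticomm_j q,
    quaternionBasis_lie_lie_i_j_i q, quaternionBasis_lie_j_lie_i_j q⟩

end OrderedRing

/-- In the classification of the AdS superalgebra `osp(1|4)`: if `b² = p² = −¼`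
and `bp + pb = 0`, then setting `h := [b,p]` the quaternions `b, p, h` are purely
imaginary, `h = 2bp`, `h² = −¼`, `h` anticommutes with `b` and `p`, `[h,b] = p`
and `[p,h] = b`; that is, `(2b, 2p, 2h)` is an oriented orthonormal basis of `Im ℍ`. -/
theorem stmt_10 (b p h : Quaternion ℝ)
    (hb : b * b = ((-1/4 : ℝ) : Quaternion ℝ))
    (hp : p * p = ((-1/4 : ℝ) : Quaternion ℝ))
    (hbp : b * p + p * b = 0)
    (hh : h = b * p - p * b) :
    b.re = 0 ∧ p.re = 0 ∧ h.re = 0 ∧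
    h = (2 : ℝ) • (b * p) ∧ h * h = ((-1/4 : ℝ) : Quaternion ℝ) ∧
    h * b + b * h = 0 ∧ h * p + p * h = 0 ∧
    h * b - b * h = p ∧ p * h - h * p = b := by
  have neg_quarter_nonpos : (-1 / 4 : ℝ) ≤ 0 := by norm_num
  simpa only [show (-4 : ℝ) * (-1 / 4) = 1 by norm_num,
    show (-4 : ℝ) * (-1 / 4 * (-1 / 4)) = -1 / 4 by norm_num, one_smul] using
    stmt_10_general neg_quarter_nonpos neg_quarter_nonpos b p h hb hp hbp hh
end

section
/- Let h ∈ ℍ and let c₂, c₃ ∈ ℍ be purely imaginary quaternions, not both zero. Suppose h * c₂ + c₂ * conj h = 0 and c₂ + h * c₃ + c₃ * conj h = 0. Then h is purely imaginary, c₂ = 0, c₃ ≠ 0, and there exists ψ ∈ ℝ with h = ψ • c₃. (This is the paper's solution of the [H,Q,Q] Jacobi equations in the classification of galilean kinematical Lie superalgebras: the two galilean superalgebras have h = ψ c₃ with c₂ = 0.) -/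
/-!
If `h c + c h̄ = 0` with `c ≠ 0`, then `h` is conjugate to `-h̄`; comparing real parts, `Re h = 0`,
so `h̄ = -h` and `h` commutes with `c`. Were `c₂ ≠ 0`, this would apply to `c = c₂`, and the second
equation would read `c₂ = -[h, c₃]`. As `h²` is real, `h` anticommutes with `[h, c₃]`; it also
commutes with it, so `[h, c₃] = 0`, contradicting `c₂ ≠ 0`. Hence `c₂ = 0`, and the first remark
applies to `c = c₃`. Finally, commuting imaginary quaternions are real multiples of each other.
-/

theorem commute_of_commute_sq_of_commute_lie {A : Type*} [Ring A] [NoZeroDivisors A]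
    [NeZero (2 : A)] {a b : A} (h_sq : Commute (a ^ 2) b) (h_lie : Commute a ⁅a, b⁆) :
    Commute a b := by
  have h_anti : a * ⁅a, b⁆ + ⁅a, b⁆ * a = 0 :=
    calc a * ⁅a, b⁆ + ⁅a, b⁆ * a = a ^ 2 * b - b * a ^ 2 := by
          rw [Ring.lie_def]
          noncomm_ring
      _ = 0 := sub_eq_zero.mpr h_sq.eq
  have h_two_mul : 2 * (a * ⁅a, b⁆) = 0 := by rwa [← h_lie.eq, ← two_mul] at h_anti
  have h_mul : a * ⁅a, b⁆ = 0 := (mul_eq_zero.mp h_two_mul).resolve_left two_ne_zero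
  rcases mul_eq_zero.mp h_mul with rfl | h_lie_zero
  · exact Commute.zero_left b
  · exact commute_iff_lie_eq.mpr h_lie_zero

theorem mul_add_mul_star_eq_lie {A : Type*} [Ring A] [Star A] {a : A} (ha : star a = -a) (b : A) :
    a * b + b * star a = ⁅a, b⁆ := by
  rw [ha, mul_neg, ← sub_eq_add_neg, Ring.lie_def]

section Quaternion

open scoped Quaternion

theorem quaternion_re_mul_comm {R : Type*} [CommRing R] (a b : ℍ[R]) :
    (a * b).re = (b * a).re := by
  simp only [Quaternion.re_mul]
  ring

section OrderedRing

variable {R : Type*} [CommRing R] [LinearOrder R] [IsStrictOrderedRing R] {h c : ℍ[R]}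

theorem re_eq_zero_of_mul_add_mul_star_eq_zero (hc : c ≠ 0) (e : h * c + c * star h = 0) :
    h.re = 0 := by
  have h_left : (h * c * star c).re = h.re * Quaternion.normSq c := by
    rw [mul_assoc, Quaternion.self_mul_star, Quaternion.mul_coe_eq_smul, Quaternion.re_smul,
      smul_eq_mul, mul_comm]
  have h_right : (c * star h * star c).re = h.re * Quaternion.normSq c := by
    rw [quaternion_re_mul_comm, ← mul_assoc, Quaternion.star_mul_self,
      Quaternion.coe_mul_eq_smul, Quaternion.re_smul, Quaternion.re_star, smul_eq_mul, mul_comm]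
  have h_sum : h.re * Quaternion.normSq c + h.re * Quaternion.normSq c = 0 :=
    calc h.re * Quaternion.normSq c + h.re * Quaternion.normSq c
        = (h * c * star c + c * star h * star c).re := by rw [Quaternion.re_add, h_left, h_right]
      _ = 0 := by rw [← add_mul, e, zero_mul, Quaternion.re_zero]
  exact (mul_eq_zero.mp (add_self_eq_zero.mp h_sum)).resolve_right
    (Quaternion.normSq_ne_zero.mpr hc)

theorem commute_of_mul_add_mul_star_eq_zero (hc : c ≠ 0) (e : h * c + c * star h = 0) :
    Commute h c := by
  have hh : h.re = 0 := re_eq_zero_of_mul_add_mul_star_eq_zero hc e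
  rwa [mul_add_mul_star_eq_lie (Quaternion.star_eq_neg.mpr hh), ← commute_iff_lie_eq] at e

theorem commute_sq_of_re_eq_zero (hh : h.re = 0) : Commute (h ^ 2) c := by
  rw [Quaternion.sq_eq_neg_normSq.mpr hh]
  exact (Quaternion.coe_commute _ c).neg_left

theorem eq_zero_of_jacobi {c₂ c₃ : ℍ[R]} (e₁ : h * c₂ + c₂ * star h = 0)
    (e₂ : c₂ + h * c₃ + c₃ * star h = 0) : c₂ = 0 := by
  by_contra hc₂
  have hh : h.re = 0 := re_eq_zero_of_mul_add_mul_star_eq_zero hc₂ e₁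
  have h_lie : ⁅h, c₃⁆ = -c₂ := by
    rw [← mul_add_mul_star_eq_lie (Quaternion.star_eq_neg.mpr hh), eq_neg_iff_add_eq_zero,
      add_comm, ← add_assoc, e₂]
  have h_comm : Commute h ⁅h, c₃⁆ := by
    rw [h_lie]
    exact (commute_of_mul_add_mul_star_eq_zero hc₂ e₁).neg_right
  have : CharZero ℍ[R] := charZero_of_injective_algebraMap Quaternion.algebraMap_injective
  have h_comm₃ : Commute h c₃ :=
    commute_of_commute_sq_of_commute_lie (commute_sq_of_re_eq_zero hh) h_comm
  exact hc₂ (neg_eq_zero.mp (h_lie.symm.trans (commute_iff_lie_eq.mp h_comm₃)))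

end OrderedRing

section OrderedField

variable {K : Type*} [Field K] [LinearOrder K] [IsStrictOrderedRing K]

theorem exists_eq_smul_of_commute {a b : ℍ[K]} (ha : a.re = 0) (hb : b.re = 0) (hb_ne : b ≠ 0)
    (hab : Commute a b) : ∃ r : K, a = r • b := by
  have h_real : a * b = ((a * b).re : ℍ[K]) := by
    rw [← Quaternion.star_eq_self, star_mul, Quaternion.star_eq_neg.mpr ha,
      Quaternion.star_eq_neg.mpr hb, neg_mul_neg, hab.eq]
  have h_inv : b⁻¹ = -(Quaternion.normSq b)⁻¹ • b := by
    rw [Quaternion.inv_def, Quaternion.star_eq_neg.mpr hb, smul_neg, neg_smul]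
  refine ⟨(a * b).re * -(Quaternion.normSq b)⁻¹, ?_⟩
  calc a = a * b * b⁻¹ := (mul_inv_cancel_right₀ hb_ne a).symm
    _ = (a * b).re • b⁻¹ := by rw [h_real, Quaternion.coe_mul_eq_smul, Quaternion.re_coe]
    _ = ((a * b).re * -(Quaternion.normSq b)⁻¹) • b := by rw [h_inv, smul_smul]

theorem stmt_11_general {h c₂ c₃ : ℍ[K]} (hc₃ : c₃.re = 0) (hne : ¬(c₂ = 0 ∧ c₃ = 0))
    (e₁ : h * c₂ + c₂ * star h = 0) (e₂ : c₂ + h * c₃ + c₃ * star h = 0) :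
    h.re = 0 ∧ c₂ = 0 ∧ c₃ ≠ 0 ∧ ∃ ψ : K, h = ψ • c₃ := by
  obtain rfl : c₂ = 0 := eq_zero_of_jacobi e₁ e₂
  have hc₃_ne : c₃ ≠ 0 := fun hc₃_zero => hne ⟨rfl, hc₃_zero⟩
  rw [zero_add] at e₂
  have hh : h.re = 0 := re_eq_zero_of_mul_add_mul_star_eq_zero hc₃_ne e₂
  have h_comm : Commute h c₃ := commute_of_mul_add_mul_star_eq_zero hc₃_ne e₂
  exact ⟨hh, rfl, hc₃_ne, exists_eq_smul_of_commute hh hc₃ hc₃_ne h_comm⟩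

end OrderedField

end Quaternion

/-- The paper's solution of the `[H,Q,Q]` Jacobi equations for the galilean
kinematical Lie superalgebras: if `c₂, c₃ ∈ Im ℍ` are not both zero and
`h c₂ + c₂ h̄ = 0` and `c₂ + h c₃ + c₃ h̄ = 0`, then `h` is purely imaginary,
`c₂ = 0`, `c₃ ≠ 0` and `h = ψ c₃` for some real `ψ`. -/
theorem stmt_11 (h c₂ c₃ : Quaternion ℝ) (hc₂ : c₂.re = 0) (hc₃ : c₃.re = 0)
    (hne : ¬(c₂ = 0 ∧ c₃ = 0))
    (e₁ : h * c₂ + c₂ * star h = 0)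
    (e₂ : c₂ + h * c₃ + c₃ * star h = 0) :
    h.re = 0 ∧ c₂ = 0 ∧ c₃ ≠ 0 ∧ ∃ ψ : ℝ, h = ψ • c₃ :=
  stmt_11_general hc₃ hne e₁ e₂
end

section
/- Let χ ∈ ℝ, let h ∈ ℍ, and let c₂, c₃ ∈ ℍ be purely imaginary quaternions, not both zero. Suppose χ • c₂ − c₃ = h * c₂ + c₂ * conj h and χ • c₃ + c₂ = h * c₃ + c₃ * conj h. Then: h.re = χ/2; c₂ ≠ 0 and c₃ ≠ 0; and, setting a := h − ((χ/2 : ℝ) : ℍ), one has a * c₂ − c₂ * a = −c₃, a * c₃ − c₃ * a = c₂, normSq a = 1/4, normSq c₂ = normSq c₃, and the quaternions a, c₂, c₃ are pairwise orthogonal in the sense that (c₂ * conj c₃).re = 0, (a * conj c₂).re = 0 and (a * conj c₃).re = 0. (This is the paper's solution of the [H,Q,Q] Jacobi equations for the kinematical Lie algebras K4_χ, showing that (Im h, c₃, c₂) is an orthogonal triple with |Im h| = ½.) -/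
/-!
Since `h * c + c * star h = (2 * h.re) • c + ⁅h, c⁆`, the two equations say that
`t := χ - 2 * h.re` satisfies `t • c₂ - c₃ = ⁅h, c₂⁆` and `t • c₃ + c₂ = ⁅h, c₃⁆`. The bracket with
a fixed quaternion is skew-adjoint for the Euclidean pairing `(x * star y).re`. Pairing the
equations with `c₂` and `c₃` and adding gives `t * (normSq c₂ + normSq c₃) = 0`, so `t = 0`. The
bracket with `a := h - χ / 2` then acts on `c₂, c₃` as a quarter turn, which by skewness makes
`c₂, c₃` orthogonal to each other and to `a`, and of equal norm. Finally `a * a` is central, so `a`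
anticommutes with `c₂ = ⁅a, c₃⁆`; hence `-c₃ = ⁅a, c₂⁆ = 2 * (a * c₂)`, and taking norms gives
`4 * normSq a = 1`.
-/

open Quaternion

theorem lie_lie_of_commute_mul_self {R : Type*} [Ring R] {a b : R} (hab : Commute (a * a) b) :
    ⁅a, ⁅a, b⁆⁆ = 2 * (a * ⁅a, b⁆) := by
  have h : a * (a * b) = b * (a * a) := by rw [← mul_assoc, hab.eq]
  simp only [Ring.lie_def]
  linear_combination (norm := noncomm_ring) -h

section CommRing

variable {R : Type*} [CommRing R]

theorem quaternion_re_mul_comm_s12 (x y : ℍ[R]) : (x * y).re = (y * x).re := by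
  simp only [re_mul]
  ring

theorem re_mul_star_comm (x y : ℍ[R]) : (x * star y).re = (y * star x).re := by
  rw [← re_star, star_mul, star_star]

theorem star_lie_eq_lie_star (a x : ℍ[R]) : star ⁅a, x⁆ = ⁅a, star x⁆ := by
  simp only [Ring.lie_def, star_sub, star_mul, star_eq_two_re_sub (a := a), mul_sub, sub_mul,
    mul_coe_eq_smul, coe_mul_eq_smul]
  abel

theorem re_lie_mul (a x y : ℍ[R]) : (⁅a, x⁆ * y).re = -(x * ⁅a, y⁆).re := by
  have cyclic : (a * (x * y)).re = (x * (y * a)).re := by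
    rw [quaternion_re_mul_comm_s12, mul_assoc]
  simp only [Ring.lie_def, sub_mul, mul_sub, mul_assoc, re_sub, cyclic, neg_sub]

theorem re_lie_mul_star (a x y : ℍ[R]) : (⁅a, x⁆ * star y).re = -(x * star ⁅a, y⁆).re := by
  rw [star_lie_eq_lie_star, re_lie_mul]

theorem re_lie_mul_star_self (a x : ℍ[R]) : (⁅a, x⁆ * star x).re = 0 := by
  have cyclic : (x * (a * star x)).re = (a * (x * star x)).re := by
    rw [quaternion_re_mul_comm_s12, mul_assoc, star_comm_self']
  rw [Ring.lie_def, sub_mul, mul_assoc, mul_assoc, re_sub, cyclic, sub_self]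

theorem re_mul_star_lie_self (a x : ℍ[R]) : (a * star ⁅a, x⁆).re = 0 := by
  rw [← neg_eq_zero, ← re_lie_mul_star, Ring.lie_def, sub_self, zero_mul, re_zero]

theorem mul_add_mul_star_eq (h c : ℍ[R]) :
    h * c + c * star h = (2 * h.re) • c + ⁅h, c⁆ := by
  rw [star_eq_two_re_sub, mul_sub, mul_coe_eq_smul, Ring.lie_def]
  abel

theorem lie_sub_coe (h c : ℍ[R]) (r : R) : ⁅h - (r : ℍ[R]), c⁆ = ⁅h, c⁆ := by
  simp only [Ring.lie_def, sub_mul, mul_sub, coe_commutes, sub_sub_sub_cancel_right]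

theorem commute_mul_self_of_re_eq_zero {a : ℍ[R]} (ha : a.re = 0) (c : ℍ[R]) :
    Commute (a * a) c := by
  have star_a : star a = -a := by rw [star_eq_two_re_sub, ha, mul_zero, coe_zero, zero_sub]
  have mul_self_a : a * a = (-normSq a : R) := by
    rw [coe_neg, ← self_mul_star, star_a, mul_neg, neg_neg]
  exact mul_self_a ▸ coe_commute _ c

theorem normSq_lie_lie {a : ℍ[R]} (ha : a.re = 0) (c : ℍ[R]) :
    normSq ⁅a, ⁅a, c⁆⁆ = 4 * normSq a * normSq ⁅a, c⁆ := by
  have normSq_two : normSq (2 : ℍ[R]) = 4 := by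
    rw [← Nat.cast_ofNat, normSq_natCast]
    norm_num
  rw [lie_lie_of_commute_mul_self (commute_mul_self_of_re_eq_zero ha c), map_mul, map_mul,
    normSq_two, mul_assoc]

theorem normSq_eq_of_lie_eq {a c d : ℍ[R]} (hc : ⁅a, c⁆ = -d) (hd : ⁅a, d⁆ = c) :
    normSq c = normSq d := by
  have skew := re_lie_mul_star a d c
  rwa [hc, hd, star_neg, mul_neg, re_neg, neg_neg] at skew

theorem four_mul_normSq_eq_one_of_lie_eq [IsCancelMulZero R] {a c d : ℍ[R]} (ha : a.re = 0)
    (hne : normSq c ≠ 0) (hc : ⁅a, c⁆ = -d) (hd : ⁅a, d⁆ = c) : 4 * normSq a = 1 := by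
  refine mul_right_cancel₀ hne ?_
  calc 4 * normSq a * normSq c
      = normSq ⁅a, ⁅a, d⁆⁆ := by rw [normSq_lie_lie ha, hd]
    _ = normSq d := by rw [hd, hc, normSq_neg]
    _ = 1 * normSq c := by rw [one_mul, normSq_eq_of_lie_eq hc hd]

end CommRing

section OrderedCommRing

variable {R : Type*} [CommRing R] [LinearOrder R] [IsStrictOrderedRing R]

theorem eq_zero_of_smul_eq_lie {t : R} {h c d : ℍ[R]} (hne : ¬(c = 0 ∧ d = 0))
    (hc : t • c - d = ⁅h, c⁆) (hd : t • d + c = ⁅h, d⁆) : t = 0 := by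
  have pair_c : t * normSq c - (d * star c).re = 0 := by
    simpa only [← hc, sub_mul, smul_mul_assoc, re_sub, re_smul, smul_eq_mul, ← normSq_def]
      using re_lie_mul_star_self h c
  have pair_d : t * normSq d + (c * star d).re = 0 := by
    simpa only [← hd, add_mul, smul_mul_assoc, re_add, re_smul, smul_eq_mul, ← normSq_def]
      using re_lie_mul_star_self h d
  have sum_eq_zero : t * (normSq c + normSq d) = 0 := by
    linear_combination pair_c + pair_d + re_mul_star_comm d c
  refine (mul_eq_zero.mp sum_eq_zero).resolve_right fun h0 => hne ?_
  simpa only [normSq_eq_zero] using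
    (add_eq_zero_iff_of_nonneg (normSq_nonneg (a := c)) normSq_nonneg).mp h0

theorem eq_two_mul_re_of_smul_eq_mul_add_mul_star {χ : R} {h c d : ℍ[R]}
    (hne : ¬(c = 0 ∧ d = 0)) (hc : χ • c - d = h * c + c * star h)
    (hd : χ • d + c = h * d + d * star h) : χ = 2 * h.re := by
  rw [mul_add_mul_star_eq] at hc hd
  have lie_c : (χ - 2 * h.re) • c - d = ⁅h, c⁆ := by linear_combination (norm := module) hc
  have lie_d : (χ - 2 * h.re) • d + c = ⁅h, d⁆ := by linear_combination (norm := module) hd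
  exact sub_eq_zero.mp (eq_zero_of_smul_eq_lie hne lie_c lie_d)

end OrderedCommRing

theorem stmt_12_general {K : Type*} [Field K] [LinearOrder K] [IsStrictOrderedRing K]
    (χ : K) (h c₂ c₃ : ℍ[K])
    (hne : ¬(c₂ = 0 ∧ c₃ = 0))
    (e₁ : χ • c₂ - c₃ = h * c₂ + c₂ * star h)
    (e₂ : χ • c₃ + c₂ = h * c₃ + c₃ * star h) :
    h.re = χ/2 ∧ c₂ ≠ 0 ∧ c₃ ≠ 0 ∧
    (h - ((χ/2 : K) : ℍ[K])) * c₂ - c₂ * (h - ((χ/2 : K) : ℍ[K])) = -c₃ ∧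
    (h - ((χ/2 : K) : ℍ[K])) * c₃ - c₃ * (h - ((χ/2 : K) : ℍ[K])) = c₂ ∧
    normSq (h - ((χ/2 : K) : ℍ[K])) = 1/4 ∧
    normSq c₂ = normSq c₃ ∧
    (c₂ * star c₃).re = 0 ∧
    ((h - ((χ/2 : K) : ℍ[K])) * star c₂).re = 0 ∧
    ((h - ((χ/2 : K) : ℍ[K])) * star c₃).re = 0 := by
  have χ_eq : χ = 2 * h.re := eq_two_mul_re_of_smul_eq_mul_add_mul_star hne e₁ e₂
  have re_h : h.re = χ / 2 := by linear_combination -χ_eq / 2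
  rw [mul_add_mul_star_eq, ← χ_eq] at e₁ e₂
  rw [sub_eq_add_neg, add_right_inj, ← lie_sub_coe h c₂ (χ / 2)] at e₁
  rw [add_right_inj, ← lie_sub_coe h c₃ (χ / 2)] at e₂
  set a := h - ((χ / 2 : K) : ℍ[K]) with a_def
  have re_a : a.re = 0 := by rw [a_def, re_sub, re_coe, re_h, sub_self]
  have lie_a_c₂ : ⁅a, c₂⁆ = -c₃ := e₁.symm
  have lie_a_c₃ : ⁅a, c₃⁆ = c₂ := e₂.symm
  have normSq_c₂ : normSq c₂ = normSq c₃ := normSq_eq_of_lie_eq lie_a_c₂ lie_a_c₃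
  have c₂_eq_zero_iff : c₂ = 0 ↔ c₃ = 0 := by rw [← normSq_eq_zero, normSq_c₂, normSq_eq_zero]
  have c₂_ne : c₂ ≠ 0 := fun h₂ => hne ⟨h₂, c₂_eq_zero_iff.mp h₂⟩
  have normSq_a : 4 * normSq a = 1 :=
    four_mul_normSq_eq_one_of_lie_eq re_a (normSq_ne_zero.mpr c₂_ne) lie_a_c₂ lie_a_c₃
  refine ⟨re_h, c₂_ne, mt c₂_eq_zero_iff.mpr c₂_ne, lie_a_c₂, lie_a_c₃,
    by linear_combination normSq_a / 4, normSq_c₂, ?_, ?_, ?_⟩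
  · rw [← lie_a_c₃, re_lie_mul_star_self]
  · rw [← lie_a_c₃, re_mul_star_lie_self]
  · rw [← neg_neg c₃, ← lie_a_c₂, star_neg, mul_neg, re_neg, re_mul_star_lie_self, neg_zero]

/-- The paper's solution of the `[H,Q,Q]` Jacobi equations for the kinematical Lie
algebras `K4_χ`: if `c₂, c₃ ∈ Im ℍ` are not both zero and
`χ c₂ − c₃ = h c₂ + c₂ h̄` and `χ c₃ + c₂ = h c₃ + c₃ h̄`, then `Re h = χ/2`,
both `c₂` and `c₃` are nonzero, and with `a := Im h = h − χ/2` one has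
`[a,c₂] = −c₃`, `[a,c₃] = c₂`, `|a|² = ¼`, `|c₂| = |c₃|`, and `a, c₂, c₃` are
pairwise orthogonal. -/
theorem stmt_12 (χ : ℝ) (h c₂ c₃ : Quaternion ℝ) (hc₂ : c₂.re = 0) (hc₃ : c₃.re = 0)
    (hne : ¬(c₂ = 0 ∧ c₃ = 0))
    (e₁ : χ • c₂ - c₃ = h * c₂ + c₂ * star h)
    (e₂ : χ • c₃ + c₂ = h * c₃ + c₃ * star h) :
    h.re = χ/2 ∧ c₂ ≠ 0 ∧ c₃ ≠ 0 ∧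
    (h - ((χ/2 : ℝ) : Quaternion ℝ)) * c₂ - c₂ * (h - ((χ/2 : ℝ) : Quaternion ℝ)) = -c₃ ∧
    (h - ((χ/2 : ℝ) : Quaternion ℝ)) * c₃ - c₃ * (h - ((χ/2 : ℝ) : Quaternion ℝ)) = c₂ ∧
    Quaternion.normSq (h - ((χ/2 : ℝ) : Quaternion ℝ)) = 1/4 ∧
    Quaternion.normSq c₂ = Quaternion.normSq c₃ ∧
    (c₂ * star c₃).re = 0 ∧
    ((h - ((χ/2 : ℝ) : Quaternion ℝ)) * star c₂).re = 0 ∧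
    ((h - ((χ/2 : ℝ) : Quaternion ℝ)) * star c₃).re = 0 :=
  stmt_12_general χ h c₂ c₃ hne e₁ e₂
end

section
/- Let B : ℍ → ℍ → ℍ be ℝ-bilinear and suppose that for all purely imaginary quaternions ω, β and every s ∈ ℍ one has ω * B(β, s) = B(ω*β − β*ω, s) + B(β, ω*s). Then there exists a unique b ∈ ℍ such that B(β, s) = β * s * b for every purely imaginary β and every s ∈ ℍ. (This is the paper's claim that the space of r-equivariant maps V ⊗ S → S, where V = Im ℍ is the vector representation and S = ℍ the spinor representation of sp(1), is a copy of ℍ realised by (β, s) ↦ β s b; it justifies the general form [B(β),Q(s)] = Q(β s b) and [P(π),Q(s)] = Q(π s p) of the brackets.) -/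
/-!
Taking `s = 1` in the equivariance condition gives `B(β,ω) = ω B(β,1) - B([ω,β],1)`, so `B` is
determined on imaginary arguments by `f(β) = B(β,1)`. Taking `ω = β` instead shows that left
multiplication by `β` commutes with `B(β,·)`; expanding `ω B(ω,β) = B(ω,ωβ)` in terms of `f` for
orthogonal imaginary `ω, β` gives `2 ω f(ωβ) = 2 ω² f(β)`, that is, `f(ωβ) = ω f(β)` for
invertible `ω`. Now define `b` by `f(i) = i b`: the relation for `(j, i)` yields `f(k) = k b`, and
the one for `(i, j)` yields `f(j) = j b`.
-/

open scoped Quaternion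

section Imaginary

variable {R : Type*} [CommRing R] {c₁ c₃ : R} {ω β : ℍ[R,c₁,c₃]}

theorem star_eq_neg_of_re_eq_zero (hω : ω.re = 0) : star ω = -ω := by
  ext <;> simp [hω]

theorem mul_self_eq_algebraMap_of_re_eq_zero (hω : ω.re = 0) :
    ω * ω = algebraMap R ℍ[R,c₁,c₃] (ω * ω).re := by
  have h := ω.star_mul_eq_coe
  rwa [star_eq_neg_of_re_eq_zero hω, neg_mul, QuaternionAlgebra.re_neg,
    QuaternionAlgebra.coe_neg, neg_inj] at h

theorem mul_eq_neg_mul_of_re_eq_zero (hω : ω.re = 0) (hβ : β.re = 0) (hωβ : (ω * β).re = 0) :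
    β * ω = -(ω * β) := by
  rw [← star_eq_neg_of_re_eq_zero hωβ, star_mul, star_eq_neg_of_re_eq_zero hω,
    star_eq_neg_of_re_eq_zero hβ, neg_mul_neg]

theorem re_commutator_eq_zero (ω β : ℍ[R,c₁,c₃]) : (ω * β - β * ω).re = 0 := by
  simp only [QuaternionAlgebra.re_sub, QuaternionAlgebra.re_mul]
  ring

end Imaginary

theorem isUnit_of_mul_self_eq_smul_one {R A : Type*} [CommSemiring R] [Semiring A] [Algebra R A]
    {r : R} {a : A} (hr : IsUnit r) (ha : a * a = r • (1 : A)) : IsUnit a := by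
  rw [← isUnit_pow_iff two_ne_zero, sq, ha, ← Algebra.algebraMap_eq_smul_one]
  exact hr.map (algebraMap R A)

section QuaternionBasis

variable {R A : Type*} [CommRing R] [Ring A] [Algebra R A] {c₁ c₂ c₃ : R}

theorem isUnit_quaternionBasis_i (hc₁ : IsUnit c₁) (q : QuaternionAlgebra.Basis A c₁ 0 c₃) :
    IsUnit q.i :=
  isUnit_of_mul_self_eq_smul_one hc₁ (by rw [q.i_mul_i, zero_smul, add_zero])

theorem isUnit_quaternionBasis_j (hc₃ : IsUnit c₃) (q : QuaternionAlgebra.Basis A c₁ c₂ c₃) :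
    IsUnit q.j :=
  isUnit_of_mul_self_eq_smul_one hc₃ q.j_mul_j

end QuaternionBasis

/-- Infinitesimal equivariance of a bilinear map `(β, s) ↦ B β s` under the imaginary quaternions,
which act on imaginary `β` by `½[ω, β]` and on spinors by `½ω`; the common factor `½` is
cancelled. The first argument of `B` ranges over all quaternions, but only its restriction to
imaginary ones is constrained. The target may be any left module over the quaternion algebra. -/
def IsSpinEquivariant {R M : Type*} [CommRing R] {c₁ c₃ : R} [AddCommGroup M] [Module R M]
    [Module ℍ[R,c₁,c₃] M] (B : ℍ[R,c₁,c₃] →ₗ[R] ℍ[R,c₁,c₃] →ₗ[R] M) : Prop :=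
  ∀ ω β s : ℍ[R,c₁,c₃], ω.re = 0 → β.re = 0 →
    ω • B β s = B (ω * β - β * ω) s + B β (ω * s)

namespace IsSpinEquivariant

variable {R M : Type*} [CommRing R] {c₁ c₃ : R} [AddCommGroup M] [Module R M]
  [Module ℍ[R,c₁,c₃] M] {B : ℍ[R,c₁,c₃] →ₗ[R] ℍ[R,c₁,c₃] →ₗ[R] M} {ω β : ℍ[R,c₁,c₃]}

theorem apply_eq_smul_apply_one_sub (hB : IsSpinEquivariant B) (hω : ω.re = 0) (hβ : β.re = 0) :
    B β ω = ω • B β 1 - B (ω * β - β * ω) 1 := by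
  rw [hB ω β 1 hω hβ, mul_one, add_sub_cancel_left]

theorem smul_apply_self (hB : IsSpinEquivariant B) (hβ : β.re = 0) (s : ℍ[R,c₁,c₃]) :
    β • B β s = B β (β * s) := by
  rw [hB β β s hβ hβ, sub_self, map_zero, LinearMap.zero_apply, zero_add]

variable [IsScalarTower R ℍ[R,c₁,c₃] M]

theorem apply_mul_one_eq_smul (hB : IsSpinEquivariant B) (h2 : IsSMulRegular M (2 : R))
    (hu : IsUnit ω) (hω : ω.re = 0) (hβ : β.re = 0) (hωβ : (ω * β).re = 0) :
    B (ω * β) 1 = ω • B β 1 := by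
  obtain ⟨r, square⟩ : ∃ r : R, ω * ω = algebraMap R ℍ[R,c₁,c₃] r :=
    ⟨_, mul_self_eq_algebraMap_of_re_eq_zero hω⟩
  have anticomm : β * ω = -(ω * β) := mul_eq_neg_mul_of_re_eq_zero hω hβ hωβ
  have commutator : β * ω - ω * β = -((2 : R) • (ω * β)) := by
    rw [anticomm]; module
  have commutator_mul : ω * β * ω - ω * (ω * β) = -((2 : R) • r • β) := by
    rw [mul_assoc, anticomm, mul_neg, ← mul_assoc, square, ← Algebra.smul_def]; module
  have square_smul (m : M) : r • m = ω • ω • m := by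
    rw [smul_smul, square, algebraMap_smul]
  have expand_left : ω • B ω β = (ω * β) • B ω 1 + (2 : R) • ω • B (ω * β) 1 := by
    rw [hB.apply_eq_smul_apply_one_sub hβ hω, commutator, map_neg, map_smul, LinearMap.neg_apply,
      LinearMap.smul_apply, sub_neg_eq_add, smul_add, mul_smul, smul_comm ω (2 : R)]
  have expand_right : B ω (ω * β) = (ω * β) • B ω 1 + (2 : R) • ω • ω • B β 1 := by
    rw [hB.apply_eq_smul_apply_one_sub hωβ hω, commutator_mul, map_neg, map_smul, map_smul,
      LinearMap.neg_apply, LinearMap.smul_apply, LinearMap.smul_apply, sub_neg_eq_add,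
      square_smul]
  have doubled : (2 : R) • ω • B (ω * β) 1 = (2 : R) • ω • ω • B β 1 := by
    rw [← add_right_inj, ← expand_left, hB.smul_apply_self hω, expand_right]
  exact hu.smul_left_cancel.1 (h2 doubled)

theorem exists_apply_one_eq_smul (hB : IsSpinEquivariant B) (h2 : IsSMulRegular M (2 : R))
    (hc₁ : IsUnit c₁) (hc₃ : IsUnit c₃) :
    ∃ b : M, ∀ β : ℍ[R,c₁,c₃], β.re = 0 → B β 1 = β • b := by
  let q : QuaternionAlgebra.Basis ℍ[R,c₁,c₃] c₁ 0 c₃ := QuaternionAlgebra.Basis.self R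
  have unit_i : IsUnit q.i := isUnit_quaternionBasis_i hc₁ q
  have unit_j : IsUnit q.j := isUnit_quaternionBasis_j hc₃ q
  have j_mul_i : q.j * q.i = -q.k := by simp
  obtain ⟨b, hb : q.i • b = B q.i 1⟩ := unit_i.smul_bijective.surjective (B q.i 1)
  have hk : B q.k 1 = q.k • b := by
    have h := hB.apply_mul_one_eq_smul h2 unit_j (β := q.i) rfl rfl (by simp [q])
    rwa [j_mul_i, map_neg, LinearMap.neg_apply, ← hb, smul_smul, j_mul_i, neg_smul, neg_inj] at h
  have hj : B q.j 1 = q.j • b := by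
    have h := hB.apply_mul_one_eq_smul h2 unit_i (β := q.j) rfl rfl (by simp [q])
    rw [q.i_mul_j, hk, ← q.i_mul_j, mul_smul] at h
    exact (unit_i.smul_left_cancel.1 h).symm
  refine ⟨b, fun β hβ ↦ ?_⟩
  have expand : β = β.imI • q.i + β.imJ • q.j + β.imK • q.k := by
    ext <;> simp [q, hβ]
  rw [expand]
  simp only [map_add, map_smul, LinearMap.add_apply, LinearMap.smul_apply, ← hb, hj, hk, add_smul,
    smul_assoc]

theorem apply_eq_mul_smul (hB : IsSpinEquivariant B) {b : M}
    (hb : ∀ β : ℍ[R,c₁,c₃], β.re = 0 → B β 1 = β • b) (hβ : β.re = 0) (s : ℍ[R,c₁,c₃]) :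
    B β s = (β * s) • b := by
  have scalar : B β (s.re : ℍ[R,c₁,c₃]) = (β * s.re) • b := by
    rw [← mul_one (s.re : ℍ[R,c₁,c₃]), QuaternionAlgebra.coe_mul_eq_smul, map_smul, hb β hβ,
      mul_smul_comm, mul_one, smul_assoc]
  have imaginary : B β s.im = (β * s.im) • b := by
    rw [hB.apply_eq_smul_apply_one_sub s.re_im hβ, hb β hβ, hb _ (re_commutator_eq_zero _ _),
      smul_smul, ← sub_smul, sub_sub_cancel]
  rw [← s.re_add_im, map_add, scalar, imaginary, mul_add, add_smul]

end IsSpinEquivariant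

theorem stmt_16_general {R M : Type*} [CommRing R] {c₁ c₃ : R} [AddCommGroup M] [Module R M]
    [Module ℍ[R,c₁,c₃] M] [IsScalarTower R ℍ[R,c₁,c₃] M] (h2 : IsSMulRegular M (2 : R))
    (hc₁ : IsUnit c₁) (hc₃ : IsUnit c₃) {B : ℍ[R,c₁,c₃] →ₗ[R] ℍ[R,c₁,c₃] →ₗ[R] M}
    (hB : IsSpinEquivariant B) :
    ∃! b : M, ∀ β s : ℍ[R,c₁,c₃], β.re = 0 → B β s = (β * s) • b := by
  obtain ⟨b, hb⟩ := hB.exists_apply_one_eq_smul h2 hc₁ hc₃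
  refine ⟨b, fun β s hβ ↦ hB.apply_eq_mul_smul hb hβ s, fun b' hb' ↦ ?_⟩
  let i : ℍ[R,c₁,c₃] := (QuaternionAlgebra.Basis.self R).i
  have unit_i : IsUnit i := isUnit_quaternionBasis_i hc₁ _
  rw [← unit_i.smul_left_cancel, ← hb i rfl, hb' i 1 rfl, mul_one]

/-- The space of `r`-equivariant maps `V ⊗ S → S`, with `V = Im ℍ` the vector module
and `S = ℍ` the spinor module of `sp(1)`, is a copy of `ℍ`: every ℝ-bilinear map
`B : ℍ × ℍ → ℍ` satisfying the infinitesimal equivariance condition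
`ω B(β,s) = B([ω,β],s) + B(β,ωs)` for all imaginary `ω, β` is of the form
`B(β,s) = β s b` on imaginary `β`, for a unique `b ∈ ℍ`. -/
theorem stmt_16 (B : Quaternion ℝ →ₗ[ℝ] Quaternion ℝ →ₗ[ℝ] Quaternion ℝ)
    (H : ∀ ω β s : Quaternion ℝ, ω.re = 0 → β.re = 0 →
      ω * B β s = B (ω * β - β * ω) s + B β (ω * s)) :
    ∃! b : Quaternion ℝ, ∀ β s : Quaternion ℝ, β.re = 0 → B β s = β * s * b :=
  -- `Quaternion ℝ` is a non-reducible synonym of `ℍ[ℝ,-1,-1]`: instances must match the latter.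
  let B' : ℍ[ℝ,-1,-1] →ₗ[ℝ] ℍ[ℝ,-1,-1] →ₗ[ℝ] ℍ[ℝ,-1,-1] := B
  stmt_16_general (B := B') (IsSMulRegular.of_ne_zero two_ne_zero) isUnit_one.neg isUnit_one.neg H
end

section
/- Let α, β ∈ ℝ with α² + β² = 1. Define real 2×2 matrices σ₁ = !![0,1;1,0], σ₃ = !![1,0;0,−1], ε = !![0,1;−1,0] and 𝟙₂ the identity, and define the real 4×4 matrices (as Kronecker products) γ⁰ = ε ⊗ₖ (α•σ₁ − β•σ₃), γ¹ = σ₃ ⊗ₖ (α•σ₁ − β•σ₃), γ² = −(𝟙₂ ⊗ₖ (α•σ₃ + β•σ₁)), γ³ = σ₁ ⊗ₖ (α•σ₁ − β•σ₃). Let η be the Minkowski form with η⁰⁰ = 1, η¹¹ = η²² = η³³ = −1 and η^{μν} = 0 for μ ≠ ν. Then these matrices represent the Clifford algebra Cl(1,3): for all μ, ν ∈ {0,1,2,3}, γ^μ * γ^ν + γ^ν * γ^μ = (−2 * η^{μν}) • 𝟙, where 𝟙 is the 4×4 identity matrix. (This is the Clifford-algebra relation the paper verifies when unpacking the quaternionic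 form of the Poincaré superalgebra into γ-matrix language.) -/
open Matrix Kronecker

/-- Pauli matrix σ₁. -/
def pauli1 : Matrix (Fin 2) (Fin 2) ℝ := !![0, 1; 1, 0]

/-- Pauli matrix σ₃. -/
def pauli3 : Matrix (Fin 2) (Fin 2) ℝ := !![1, 0; 0, -1]

/-- The 2×2 symplectic matrix ε = iσ₂. -/
def eps2 : Matrix (Fin 2) (Fin 2) ℝ := !![0, 1; -1, 0]

/-- The γ-matrices of the paper (for the symplectic structure parametrised by
`(α,β)` on the circle `α² + β² = 1`), as Kronecker products. -/
def gammaMat (α β : ℝ) : Fin 4 → Matrix (Fin 2 × Fin 2) (Fin 2 × Fin 2) ℝ :=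
  ![eps2 ⊗ₖ (α • pauli1 - β • pauli3),
    pauli3 ⊗ₖ (α • pauli1 - β • pauli3),
    -((1 : Matrix (Fin 2) (Fin 2) ℝ) ⊗ₖ (α • pauli3 + β • pauli1)),
    pauli1 ⊗ₖ (α • pauli1 - β • pauli3)]

/-- The Minkowski form η = diag(1,−1,−1,−1). -/
def etaMink : Matrix (Fin 4) (Fin 4) ℝ :=
  !![1, 0, 0, 0; 0, -1, 0, 0; 0, 0, -1, 0; 0, 0, 0, -1]

/-!
The matrices `ε`, `σ₃`, `σ₁`, `A = α σ₁ - β σ₃` and `B = α σ₃ + β σ₁` are `2 × 2` of trace zero, so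
by Cayley–Hamilton any two of them have a scalar anticommutator, given by the trace form. Any two
of the `γ^μ`, which have the form `M ⊗ A` or `-(𝟙 ⊗ B)`, have commuting Kronecker factors in one of
the two slots, so their anticommutator reduces to one of `2 × 2` matrices in the other slot.
-/

section Kronecker

variable {m n R : Type*} [Fintype m] [Fintype n] [CommSemiring R]

theorem kronecker_mul_add_swap_of_commute_left {X Y : Matrix m m R} (h : Commute X Y)
    (A B : Matrix n n R) :
    (X ⊗ₖ A) * (Y ⊗ₖ B) + (Y ⊗ₖ B) * (X ⊗ₖ A) = (X * Y) ⊗ₖ (A * B + B * A) := by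
  rw [← mul_kronecker_mul, ← mul_kronecker_mul, ← h.eq, ← kronecker_add]

theorem kronecker_mul_add_swap_of_commute_right (X Y : Matrix m m R) {A B : Matrix n n R}
    (h : Commute A B) :
    (X ⊗ₖ A) * (Y ⊗ₖ B) + (Y ⊗ₖ B) * (X ⊗ₖ A) = (X * Y + Y * X) ⊗ₖ (A * B) := by
  rw [← mul_kronecker_mul, ← mul_kronecker_mul, ← h.eq, ← add_kronecker]

end Kronecker

section TraceZero

variable {R : Type*} [CommRing R] {X Y : Matrix (Fin 2) (Fin 2) R}

theorem mul_self_eq_neg_det_smul_one_of_trace_eq_zero (hX : X.trace = 0) :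
    X * X = (-X.det) • (1 : Matrix (Fin 2) (Fin 2) R) := by
  nontriviality R
  have cayley_hamilton := X.aeval_self_charpoly
  simp only [charpoly_fin_two, hX, map_zero, zero_mul, sub_zero, map_add, map_pow,
    Polynomial.aeval_X, Polynomial.aeval_C, Algebra.algebraMap_eq_smul_one] at cayley_hamilton
  rw [← sq, neg_smul, eq_neg_of_add_eq_zero_left cayley_hamilton]

theorem mul_add_swap_eq_trace_smul_one_of_trace_eq_zero (hX : X.trace = 0) (hY : Y.trace = 0) :
    X * Y + Y * X = (X * Y).trace • (1 : Matrix (Fin 2) (Fin 2) R) := by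
  have polarization : X * Y + Y * X = (X + Y) * (X + Y) - X * X - Y * Y := by noncomm_ring
  have trace_add_eq_zero : (X + Y).trace = 0 := by rw [trace_add, hX, hY, add_zero]
  rw [polarization, mul_self_eq_neg_det_smul_one_of_trace_eq_zero trace_add_eq_zero,
    mul_self_eq_neg_det_smul_one_of_trace_eq_zero hX,
    mul_self_eq_neg_det_smul_one_of_trace_eq_zero hY, ← sub_smul, ← sub_smul]
  congr 1
  rw [trace_fin_two] at hX
  simp only [det_fin_two, trace_fin_two, mul_apply, Fin.sum_univ_two, Matrix.add_apply]
  linear_combination -(Y 0 0 + Y 1 1) * hX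

end TraceZero

/-- The second Kronecker factor shared by `γ⁰`, `γ¹` and `γ³`. -/
def pauliA (α β : ℝ) : Matrix (Fin 2) (Fin 2) ℝ := α • pauli1 - β • pauli3

/-- The second Kronecker factor of `-γ²`, which anticommutes with `pauliA α β`. -/
def pauliB (α β : ℝ) : Matrix (Fin 2) (Fin 2) ℝ := α • pauli3 + β • pauli1

/-- The first Kronecker factors of `γ⁰`, `γ¹`, `γ³`, which satisfy the relations of `Cl(1,2)`.
The index `i` corresponds to `γ^μ` with `μ = Fin.succAbove 2 i`, skipping `γ²`. -/
def gammaFactor : Fin 3 → Matrix (Fin 2) (Fin 2) ℝ := ![eps2, pauli3, pauli1]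

section Gamma

variable (α β : ℝ)

theorem pauliA_eq : pauliA α β = !![-β, α; α, β] := by
  ext i j
  fin_cases i <;> fin_cases j <;> simp [pauliA, pauli1, pauli3]

theorem pauliB_eq : pauliB α β = !![α, β; β, -α] := by
  ext i j
  fin_cases i <;> fin_cases j <;> simp [pauliB, pauli1, pauli3]

theorem trace_pauliA : (pauliA α β).trace = 0 := by
  simp [pauliA_eq, trace_fin_two]

theorem trace_pauliB : (pauliB α β).trace = 0 := by
  simp [pauliB_eq, trace_fin_two]

theorem pauliA_mul_self : pauliA α β * pauliA α β = (α ^ 2 + β ^ 2) • 1 := by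
  rw [mul_self_eq_neg_det_smul_one_of_trace_eq_zero (trace_pauliA α β), pauliA_eq,
    det_fin_two_of]
  congr 1
  ring

theorem pauliB_mul_self : pauliB α β * pauliB α β = (α ^ 2 + β ^ 2) • 1 := by
  rw [mul_self_eq_neg_det_smul_one_of_trace_eq_zero (trace_pauliB α β), pauliB_eq,
    det_fin_two_of]
  congr 1
  ring

theorem pauliA_mul_pauliB_add_swap :
    pauliA α β * pauliB α β + pauliB α β * pauliA α β = 0 := by
  have trace_mul_eq_zero : (pauliA α β * pauliB α β).trace = 0 := by
    rw [pauliA_eq, pauliB_eq, mul_fin_two, trace_fin_two_of]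
    ring
  rw [mul_add_swap_eq_trace_smul_one_of_trace_eq_zero (trace_pauliA α β) (trace_pauliB α β),
    trace_mul_eq_zero, zero_smul]

theorem trace_gammaFactor (i : Fin 3) : (gammaFactor i).trace = 0 := by
  fin_cases i <;> simp [gammaFactor, eps2, pauli1, pauli3, trace_fin_two]

theorem trace_gammaFactor_mul (i j : Fin 3) :
    (gammaFactor i * gammaFactor j).trace
      = -2 * etaMink ((2 : Fin 4).succAbove i) ((2 : Fin 4).succAbove j) := by
  fin_cases i <;> fin_cases j <;>
    simp [gammaFactor, eps2, pauli1, pauli3, etaMink, trace_fin_two, Fin.succAbove] <;> norm_num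

theorem gammaFactor_mul_add_swap (i j : Fin 3) :
    gammaFactor i * gammaFactor j + gammaFactor j * gammaFactor i
      = (-2 * etaMink ((2 : Fin 4).succAbove i) ((2 : Fin 4).succAbove j)) • 1 := by
  rw [mul_add_swap_eq_trace_smul_one_of_trace_eq_zero (trace_gammaFactor i)
    (trace_gammaFactor j), trace_gammaFactor_mul]

theorem gammaMat_two : gammaMat α β 2 = -(1 ⊗ₖ pauliB α β) := rfl

theorem gammaMat_succAbove (i : Fin 3) :
    gammaMat α β ((2 : Fin 4).succAbove i) = gammaFactor i ⊗ₖ pauliA α β := by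
  fin_cases i <;> rfl

theorem etaMink_two_two : etaMink 2 2 = -1 := rfl

theorem etaMink_isDiag : etaMink.IsDiag := by
  intro μ ν hμν
  fin_cases μ <;> fin_cases ν <;> first | rfl | exact absurd rfl hμν

theorem gammaMat_two_mul_self_add_self :
    gammaMat α β 2 * gammaMat α β 2 + gammaMat α β 2 * gammaMat α β 2
      = (-2 * etaMink 2 2 * (α ^ 2 + β ^ 2)) • 1 := by
  rw [gammaMat_two, neg_mul_neg, kronecker_mul_add_swap_of_commute_left (Commute.one_left 1),
    pauliB_mul_self, ← add_smul, kronecker_smul, mul_one, one_kronecker_one, etaMink_two_two]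
  congr 1
  ring

theorem gammaMat_succAbove_mul_gammaMat_two_add_swap (i : Fin 3) :
    gammaMat α β ((2 : Fin 4).succAbove i) * gammaMat α β 2
      + gammaMat α β 2 * gammaMat α β ((2 : Fin 4).succAbove i) = 0 := by
  rw [gammaMat_two, gammaMat_succAbove, mul_neg, neg_mul, ← neg_add,
    kronecker_mul_add_swap_of_commute_left (Commute.one_right _), pauliA_mul_pauliB_add_swap,
    kronecker_zero, neg_zero]

theorem gammaMat_succAbove_mul_add_swap (i j : Fin 3) :
    gammaMat α β ((2 : Fin 4).succAbove i) * gammaMat α β ((2 : Fin 4).succAbove j)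
      + gammaMat α β ((2 : Fin 4).succAbove j) * gammaMat α β ((2 : Fin 4).succAbove i)
      = (-2 * etaMink ((2 : Fin 4).succAbove i) ((2 : Fin 4).succAbove j) * (α ^ 2 + β ^ 2))
        • 1 := by
  rw [gammaMat_succAbove, gammaMat_succAbove,
    kronecker_mul_add_swap_of_commute_right _ _ (Commute.refl _), gammaFactor_mul_add_swap,
    pauliA_mul_self, smul_kronecker, kronecker_smul, one_kronecker_one, smul_smul]

theorem stmt_17_general (μ ν : Fin 4) :
    gammaMat α β μ * gammaMat α β ν + gammaMat α β ν * gammaMat α β μ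
      = (-2 * etaMink μ ν * (α ^ 2 + β ^ 2)) • 1 := by
  rcases Fin.eq_self_or_eq_succAbove 2 μ with rfl | ⟨i, rfl⟩ <;>
    rcases Fin.eq_self_or_eq_succAbove 2 ν with rfl | ⟨j, rfl⟩
  · exact gammaMat_two_mul_self_add_self α β
  · rw [add_comm, gammaMat_succAbove_mul_gammaMat_two_add_swap,
      etaMink_isDiag (Fin.succAbove_ne 2 j).symm, mul_zero, zero_mul, zero_smul]
  · rw [gammaMat_succAbove_mul_gammaMat_two_add_swap,
      etaMink_isDiag (Fin.succAbove_ne 2 i), mul_zero, zero_mul, zero_smul]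
  · exact gammaMat_succAbove_mul_add_swap α β i j

end Gamma

/-- The matrices `γ^μ` represent the Clifford algebra `Cl(1,3)`:
`γ^μ γ^ν + γ^ν γ^μ = −2 η^{μν} 𝟙`. -/
theorem stmt_17 (α β : ℝ) (hαβ : α ^ 2 + β ^ 2 = 1) (μ ν : Fin 4) :
    gammaMat α β μ * gammaMat α β ν + gammaMat α β ν * gammaMat α β μ
      = (-2 * etaMink μ ν) • (1 : Matrix (Fin 2 × Fin 2) (Fin 2 × Fin 2) ℝ) := by
  rw [stmt_17_general, hαβ, mul_one]
end

section
/- Let q ∈ ℍ satisfy q.re = 0 and q * k + k * q = 0 (equivalently, q lies in the real span of i and j). Then the bilinear form ω_q(s₁,s₂) = (s₁ * q * conj s₂).re on ℍ is invariant under the infinitesimal rotations and boosts of the Poincaré superalgebra acting on spinors: for every purely imaginary ω and all s₁, s₂ ∈ ℍ, ((ω*s₁) * q * conj s₂).re + (s₁ * q * conj (ω*s₂)).re = 0, and for every purely imaginary β and all s₁, s₂ ∈ ℍ, ((β*s₁*k) * q * conj s₂).re + (s₁ * q * conj (β*s₂*k)).re = 0. (This is the paper's claim that there is a two-parameter family ω(s₁,s₂)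 = Re(s₁(αi+βj)s̄₂) of symplectic forms on the spinor representation invariant under the Lorentz action J_i, B_i of Minkowski superspace.) -/
/-! The real part of quaternions is a trace, `Re (x y) = Re (y x)`, so for `ω_q` left multiplication
by `a` has adjoint left multiplication by `star a`, whereas right multiplication by `c` only changes
`q`: into `c q` in the first argument and into `q (star c)` in the second. A rotation is left
multiplication by a skew-adjoint element, hence skew for `ω_q`. A boost also multiplies on the right
by `k`, which preserves skewness because `k q = -q k = q (star k)`. -/

section TracialForm

variable {A M : Type*} [NonUnitalRing A] [StarRing A] [AddCommGroup M]

/-- The biadditive form `(s, t) ↦ τ (s q t*)` on a star ring attached to an additive functional `τ`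
and an element `q`. For `τ` the real part of quaternions it is the form `ω_q` on spinors. -/
def sandwichForm (τ : A →+ M) (q s t : A) : M := τ (s * q * star t)

theorem sandwichForm_neg_right (τ : A →+ M) (q s t : A) :
    sandwichForm τ q s (-t) = -sandwichForm τ q s t := by
  simp only [sandwichForm, star_neg, mul_neg, map_neg]

theorem sandwichForm_mul_right_left (τ : A →+ M) (q s t c : A) :
    sandwichForm τ q (s * c) t = sandwichForm τ (c * q) s t := by
  simp only [sandwichForm, mul_assoc]

theorem sandwichForm_mul_right_right (τ : A →+ M) (q s t c : A) :
    sandwichForm τ q s (t * c) = sandwichForm τ (q * star c) s t := by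
  simp only [sandwichForm, star_mul, mul_assoc]

theorem sandwichForm_mul_left_left {τ : A →+ M} (hτ : ∀ x y, τ (x * y) = τ (y * x))
    (q a s t : A) : sandwichForm τ q (a * s) t = sandwichForm τ q s (star a * t) := by
  calc τ (a * s * q * star t) = τ (a * (s * q * star t)) := by simp only [mul_assoc]
    _ = τ (s * q * star t * a) := hτ _ _
    _ = τ (s * q * star (star a * t)) := by simp only [star_mul, star_star, mul_assoc]

theorem sandwichForm_mul_left_add_eq_zero {τ : A →+ M} (hτ : ∀ x y, τ (x * y) = τ (y * x))
    (q : A) {a : A} (ha : a ∈ skewAdjoint A) (s t : A) :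
    sandwichForm τ q (a * s) t + sandwichForm τ q s (a * t) = 0 := by
  rw [sandwichForm_mul_left_left hτ, skewAdjoint.mem_iff.mp ha, neg_mul, sandwichForm_neg_right,
    neg_add_cancel]

theorem sandwichForm_mul_mul_add_eq_zero {τ : A →+ M} (hτ : ∀ x y, τ (x * y) = τ (y * x))
    {q a c : A} (ha : a ∈ skewAdjoint A) (hc : c * q = q * star c) (s t : A) :
    sandwichForm τ q (a * s * c) t + sandwichForm τ q s (a * t * c) = 0 := by
  rw [sandwichForm_mul_right_left, sandwichForm_mul_right_right, ← hc]
  exact sandwichForm_mul_left_add_eq_zero hτ (c * q) ha s t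

theorem stmt_18_general {τ : A →+ M} (hτ : ∀ x y, τ (x * y) = τ (y * x)) {q u : A}
    (hu : u ∈ skewAdjoint A) (hqu : q * u + u * q = 0) :
    (∀ ω s₁ s₂ : A, ω ∈ skewAdjoint A →
      sandwichForm τ q (ω * s₁) s₂ + sandwichForm τ q s₁ (ω * s₂) = 0) ∧
    (∀ β s₁ s₂ : A, β ∈ skewAdjoint A →
      sandwichForm τ q (β * s₁ * u) s₂ + sandwichForm τ q s₁ (β * s₂ * u) = 0) := by
  have u_mul_q : u * q = q * star u := by
    rw [skewAdjoint.mem_iff.mp hu, mul_neg]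
    exact eq_neg_of_add_eq_zero_right hqu
  exact ⟨fun ω s₁ s₂ hω ↦ sandwichForm_mul_left_add_eq_zero hτ q hω s₁ s₂,
    fun β s₁ s₂ hβ ↦ sandwichForm_mul_mul_add_eq_zero hτ hβ u_mul_q s₁ s₂⟩

end TracialForm

/-- The real part as an additive map; up to the factor `2` it is the reduced trace. -/
def quaternionRe (R : Type*) [CommRing R] : Quaternion R →+ R :=
  (QuaternionAlgebra.reₗ (-1 : R) 0 (-1)).toAddMonoidHom

theorem quaternionRe_mul_comm {R : Type*} [CommRing R] (x y : Quaternion R) :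
    quaternionRe R (x * y) = quaternionRe R (y * x) := by
  change (x * y).re = (y * x).re
  simp only [Quaternion.re_mul]
  ring

theorem mem_skewAdjoint_quaternion_iff {R : Type*} [CommRing R] [NoZeroDivisors R] [CharZero R]
    {x : Quaternion R} : x ∈ skewAdjoint (Quaternion R) ↔ x.re = 0 :=
  skewAdjoint.mem_iff.trans Quaternion.star_eq_neg

/-- For `q` purely imaginary and anticommuting with `k` (i.e. `q ∈ span{i,j}`),
the bilinear form `ω_q(s₁,s₂) = Re(s₁ q s̄₂)` on the spinor module `ℍ` is invariant
under the infinitesimal rotations `s ↦ ωs` and boosts `s ↦ βsk` of the Poincaré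
superalgebra. -/
theorem stmt_18 (q : Quaternion ℝ) (hre : q.re = 0) (hk : q * quatK + quatK * q = 0) :
    (∀ ω s₁ s₂ : Quaternion ℝ, ω.re = 0 →
      ((ω * s₁) * q * star s₂).re + (s₁ * q * star (ω * s₂)).re = 0) ∧
    (∀ β s₁ s₂ : Quaternion ℝ, β.re = 0 →
      ((β * s₁ * quatK) * q * star s₂).re + (s₁ * q * star (β * s₂ * quatK)).re = 0) := by
  simp only [← mem_skewAdjoint_quaternion_iff]
  exact stmt_18_general (quaternionRe_mul_comm (R := ℝ)) (mem_skewAdjoint_quaternion_iff.mpr rfl) hk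
end
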